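/- Let P, Q ∈ K[x,y] with [P,Q] ∈ K∖{0}. Let (ρ,σ) be a direction with ρ > 0 and σ < 0 such that Supp(ℓ_{ρ,σ}(P)) has at least two elements, and write (a',b') := en_{ρ,σ}(P). If a' > b' > 0, then ρ + σ < 0 (i.e. the direction (ρ,σ) lies strictly between (0,−1) and (1,−1)). -/

import Mathlib

open MvPolynomial

noncomputable section

variable {K : Type*} [Field K] [CharZero K]

/-- The support of `P` as a set of pairs `(i,j)` of exponents of `x^i y^j`. -/
def Supp (P : MvPolynomial (Fin 2) K) : Set (ℕ × ℕ) :=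
  {p | MvPolynomial.coeff (Finsupp.single 0 p.1 + Finsupp.single 1 p.2) P ≠ 0}

/-- The Jacobian bracket `[P,Q] = ∂ₓP ∂_yQ − ∂ₓQ ∂_yP`. -/
def Jb (P Q : MvPolynomial (Fin 2) K) : MvPolynomial (Fin 2) K :=
  pderiv 0 P * pderiv 1 Q - pderiv 0 Q * pderiv 1 P

/-- The `(ρ,σ)`-degree `v_{ρ,σ}(P)` (the maximum of `ρi+σj` on the support). -/
def wdeg (ρ σ : ℤ) (P : MvPolynomial (Fin 2) K) : ℤ :=
  sSup {d : ℤ | ∃ p ∈ Supp P, d = ρ * (p.1 : ℤ) + σ * (p.2 : ℤ)}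

/-- The support of the `(ρ,σ)`-leading form of `P`. -/
def LeadSupp (ρ σ : ℤ) (P : MvPolynomial (Fin 2) K) : Set (ℕ × ℕ) :=
  {p | p ∈ Supp P ∧ ρ * (p.1 : ℤ) + σ * (p.2 : ℤ) = wdeg ρ σ P}

/-- `P` is `(ρ,σ)`-homogeneous. -/
def IsHomog (ρ σ : ℤ) (P : MvPolynomial (Fin 2) K) : Prop :=
  ∀ p ∈ Supp P, ∀ q ∈ Supp P,
    ρ * (p.1 : ℤ) + σ * (p.2 : ℤ) = ρ * (q.1 : ℤ) + σ * (q.2 : ℤ)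

/-- `P` is a monomial: its support has at most one point. -/
def IsMonomial (P : MvPolynomial (Fin 2) K) : Prop := (Supp P).Subsingleton

/-- `e` is the point `en_{ρ,σ}(P)`: the point of the support of the leading form
with largest second coordinate. -/
def IsEn (ρ σ : ℤ) (P : MvPolynomial (Fin 2) K) (e : ℕ × ℕ) : Prop :=
  e ∈ LeadSupp ρ σ P ∧ ∀ q ∈ LeadSupp ρ σ P, q.2 ≤ e.2

/-- `e` is the point `st_{ρ,σ}(P)`: the point of the support of the leading form
with smallest second coordinate. -/
def IsSt (ρ σ : ℤ) (P : MvPolynomial (Fin 2) K) (e : ℕ × ℕ) : Prop :=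
  e ∈ LeadSupp ρ σ P ∧ ∀ q ∈ LeadSupp ρ σ P, e.2 ≤ q.2

/-!
Suppose that `0 ≤ ρ + σ`, let `v` be the `(ρ,σ)`-degree of `P`, and write `ℓ(f)` for the
`(ρ,σ)`-leading form of `f` at `x = 1`, a polynomial in `y`. Put `p = ℓ(P)`, so that `p` has
degree `b'`. Since `[P,Q]` is a nonzero constant, there is `S` with `[P,S] = y ∂_y P`.

A dimension count gives `ψ ≠ 0` such that `ψ(P,S)` has no monomial on the ray through
`en_{ρ,σ}(P)`; hence its leading form does not commute with the one of `P`. Differentiating `ψ`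
repeatedly in its second variable produces `g` and `n ≠ 0` with `[P,g] = n [P,S]`, where the
leading form of `n` commutes with the one of `P` and the leading form of `g` does not. Comparing
leading forms, the rational function `F = ℓ(g) / ℓ(n)` satisfies

`v p F' - (ρ + σ) F p' = ρ y p'`.

Since `a' > b'` gives `(ρ + σ) b' < v`, every rational solution `F` is a polynomial of degree at
most one. Moreover, either `ρ + σ = 0`, or `ρ` does not divide `σ` and `p` has no term of degree
`b' - 1`; in both cases `p` must be a monomial, so that the leading form of `P` has a single term.
-/

open scoped Polynomial

section WeightedWronskian

variable {R : Type*} [CommRing R]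

/-- The operation `v p f' - w f p'` on univariate polynomials: up to a constant factor, the Jacobian
bracket of weighted homogeneous forms of degrees `v` and `w`, taken at `x = 1`. For `v = w = 1` it
is `Polynomial.wronskian`. -/
def weightedWronskian (v w : ℤ) (p f : R[X]) : R[X] :=
  (v : R[X]) * p * f.derivative - (w : R[X]) * f * p.derivative

lemma weightedWronskian_mul (v w d : ℤ) (p f g : R[X]) :
    weightedWronskian v (w + d) p (f * g) =
      weightedWronskian v w p f * g + f * weightedWronskian v d p g := by
  simp only [weightedWronskian, Polynomial.derivative_mul, Int.cast_add]
  ring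

lemma coeff_X_mul_derivative (p : R[X]) (j : ℕ) :
    (Polynomial.X * p.derivative).coeff j = j * p.coeff j := by
  cases j with
  | zero => simp
  | succ j =>
    rw [Polynomial.coeff_X_mul, Polynomial.coeff_derivative, mul_comm, Nat.cast_succ]

lemma natDegree_X_mul_derivative_le (p : R[X]) :
    (Polynomial.X * p.derivative).natDegree ≤ p.natDegree := by
  rw [Polynomial.natDegree_le_iff_coeff_eq_zero]
  intro j hj
  rw [coeff_X_mul_derivative, Polynomial.coeff_eq_zero_of_natDegree_lt hj, mul_zero]

lemma coeff_X_mul_weightedWronskian (v w : ℤ) (p f : R[X]) :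
    (Polynomial.X * weightedWronskian v w p f).coeff (p.natDegree + f.natDegree) =
      ((v * f.natDegree - w * p.natDegree : ℤ) : R) * (p.leadingCoeff * f.leadingCoeff) := by
  have hcoeff (g h : R[X]) :
      (g * (Polynomial.X * h.derivative)).coeff (g.natDegree + h.natDegree) =
        g.leadingCoeff * (h.natDegree * h.leadingCoeff) := by
    rw [Polynomial.coeff_mul_add_eq_of_natDegree_le le_rfl (natDegree_X_mul_derivative_le h),
      coeff_X_mul_derivative, Polynomial.coeff_natDegree, Polynomial.coeff_natDegree]
  have hexpand : Polynomial.X * weightedWronskian v w p f =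
      Polynomial.C (v : R) * (p * (Polynomial.X * f.derivative)) -
        Polynomial.C (w : R) * (f * (Polynomial.X * p.derivative)) := by
    simp only [weightedWronskian, map_intCast]
    ring
  rw [hexpand, Polynomial.coeff_sub, Polynomial.coeff_C_mul, Polynomial.coeff_C_mul, hcoeff,
    add_comm, hcoeff]
  push_cast
  ring

variable [IsDomain R] [CharZero R]

lemma mul_natDegree_eq_of_weightedWronskian_eq_zero {v w : ℤ} {p f : R[X]} (hp : p ≠ 0)
    (hf : f ≠ 0) (H : weightedWronskian v w p f = 0) : v * f.natDegree = w * p.natDegree := by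
  have htop := coeff_X_mul_weightedWronskian v w p f
  rw [H, mul_zero, Polynomial.coeff_zero] at htop
  have hlc : p.leadingCoeff * f.leadingCoeff ≠ 0 :=
    mul_ne_zero (Polynomial.leadingCoeff_ne_zero.mpr hp) (Polynomial.leadingCoeff_ne_zero.mpr hf)
  exact sub_eq_zero.mp (Int.cast_eq_zero.mp ((mul_eq_zero.mp htop.symm).resolve_right hlc))

lemma natDegree_le_one_of_weightedWronskian_eq {v w : ℤ} {κ : R} {p f : R[X]} (hp : p ≠ 0)
    (hw : 0 ≤ w) (hvw : w * p.natDegree < v)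
    (H : weightedWronskian v w p f = Polynomial.C κ * (Polynomial.X * p.derivative)) :
    f.natDegree ≤ 1 := by
  by_contra! hdeg
  have hf : f ≠ 0 := by
    rintro rfl
    simp at hdeg
  have hrhs : (Polynomial.X * (Polynomial.C κ * (Polynomial.X * p.derivative))).coeff
      (p.natDegree + f.natDegree) = 0 := by
    obtain ⟨n, hn⟩ := Nat.exists_eq_add_of_lt hdeg
    rw [show p.natDegree + f.natDegree = p.natDegree + n + 1 + 1 by omega, Polynomial.coeff_X_mul,
      Polynomial.coeff_C_mul, coeff_X_mul_derivative,
      Polynomial.coeff_eq_zero_of_natDegree_lt (by omega), mul_zero, mul_zero]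
  have htop := coeff_X_mul_weightedWronskian v w p f
  rw [H, hrhs] at htop
  have hlc : p.leadingCoeff * f.leadingCoeff ≠ 0 :=
    mul_ne_zero (Polynomial.leadingCoeff_ne_zero.mpr hp) (Polynomial.leadingCoeff_ne_zero.mpr hf)
  have heq : v * f.natDegree - w * p.natDegree = 0 :=
    Int.cast_eq_zero.mp ((mul_eq_zero.mp htop.symm).resolve_right hlc)
  nlinarith [mul_nonneg hw (Nat.cast_nonneg (α := ℤ) p.natDegree)]

lemma support_eq_singleton_of_C_mul_eq_C_mul_X_mul_derivative {a μ : R} {p : R[X]} (hμ : μ ≠ 0)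
    (hp : p ≠ 0) (H : Polynomial.C a * p = Polynomial.C μ * (Polynomial.X * p.derivative)) :
    p.support = {p.natDegree} := by
  have heigen {j : ℕ} (hj : p.coeff j ≠ 0) : a = μ * j := by
    have hcoeff := congrArg (Polynomial.coeff · j) H
    rw [Polynomial.coeff_C_mul, Polynomial.coeff_C_mul, coeff_X_mul_derivative,
      ← mul_assoc] at hcoeff
    exact mul_right_cancel₀ hj hcoeff
  have htop : p.coeff p.natDegree ≠ 0 := Polynomial.leadingCoeff_ne_zero.mpr hp
  ext j
  rw [Polynomial.mem_support_iff, Finset.mem_singleton]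
  refine ⟨fun hj => ?_, fun hj => hj ▸ htop⟩
  exact_mod_cast mul_left_cancel₀ hμ ((heigen hj).symm.trans (heigen htop))

lemma support_eq_singleton_of_weightedWronskian_eq {v w : ℤ} {κ : R} {p f : R[X]} (hκ : κ ≠ 0)
    (hw : 0 ≤ w) (hdeg : 0 < p.natDegree) (hvw : w * p.natDegree < v)
    (hgap : w = 0 ∨ p.nextCoeff = 0)
    (H : weightedWronskian v w p f = Polynomial.C κ * (Polynomial.X * p.derivative)) :
    p.support = {p.natDegree} := by
  have hp : p ≠ 0 := Polynomial.ne_zero_of_natDegree_gt hdeg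
  have hv : (v : R) ≠ 0 := by
    have : 0 < v := lt_of_le_of_lt (by positivity) hvw
    exact_mod_cast this.ne'
  obtain ⟨α, β, rfl⟩ := Polynomial.exists_eq_X_add_C_of_natDegree_le_one
    (natDegree_le_one_of_weightedWronskian_eq hp hw hvw H)
  have hlinear : Polynomial.C (v * α : R) * p = Polynomial.C (w * α + κ : R) *
      (Polynomial.X * p.derivative) + Polynomial.C (w * β : R) * p.derivative := by
    simp only [weightedWronskian, Polynomial.derivative_add, Polynomial.derivative_C_mul,
      Polynomial.derivative_X, Polynomial.derivative_C, mul_one, add_zero] at H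
    simp only [map_mul, map_add, map_intCast]
    linear_combination H
  have hwβ : (w : R) * β = 0 := by
    rcases hgap with rfl | hnext
    · rw [Int.cast_zero, zero_mul]
    obtain ⟨b, hb⟩ := Nat.exists_eq_succ_of_ne_zero hdeg.ne'
    have hpb : p.coeff (b + 1) ≠ 0 := by
      rw [← Nat.succ_eq_add_one, ← hb]
      exact Polynomial.leadingCoeff_ne_zero.mpr hp
    rw [Polynomial.nextCoeff_of_natDegree_pos hdeg, hb, Nat.succ_sub_one] at hnext
    have hcoeff := congrArg (fun q => q.coeff b) hlinear
    simp only [Polynomial.coeff_add, Polynomial.coeff_C_mul, coeff_X_mul_derivative, hnext,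
      mul_zero, zero_add, Polynomial.coeff_derivative] at hcoeff
    exact (mul_eq_zero.mp hcoeff.symm).resolve_right
      (mul_ne_zero hpb (Nat.cast_add_one_ne_zero b))
  rw [hwβ, Polynomial.C_0, zero_mul, add_zero] at hlinear
  refine support_eq_singleton_of_C_mul_eq_C_mul_X_mul_derivative (fun hμ => hκ ?_) hp hlinear
  rw [hμ, Polynomial.C_0, zero_mul] at hlinear
  have hα : α = 0 := (mul_eq_zero.mp (Polynomial.C_eq_zero.mp
    ((mul_eq_zero.mp hlinear).resolve_right hp))).resolve_left hv
  simpa [hα] using hμ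

end WeightedWronskian

section RationalSolutions

lemma mul_derivative_pow_mul {R : Type*} [CommRing R] (q r : R[X]) (n : ℕ) :
    q * (q ^ n * r).derivative = q ^ n * (n * q.derivative * r + q * r.derivative) := by
  cases n with
  | zero => simp
  | succ n =>
    simp only [Polynomial.derivative_mul, Polynomial.derivative_pow_succ, map_add, map_natCast,
      map_one, Nat.cast_add, Nat.cast_one]
    ring

/- Here `q ^ (k + 1)` divides the denominator of the rational function `u / m` and `q ^ e` divides
`p`: this is what the most singular terms of the equation at `q` say. -/
lemma dvd_of_weightedWronskian_quotient_eq {R : Type*} [CommRing R] [IsDomain R] {v w : ℤ} {κ : R}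
    {p₁ u m₁ q : R[X]} {e k : ℕ} (hq : q ≠ 0)
    (H : q ^ (k + 1) * m₁ * weightedWronskian v w (q ^ e * p₁) u -
        u * weightedWronskian v 0 (q ^ e * p₁) (q ^ (k + 1) * m₁) =
      Polynomial.C κ * (Polynomial.X * (q ^ (k + 1) * m₁) ^ 2 * (q ^ e * p₁).derivative)) :
    q ∣ ((v * (k + 1) + w * e : ℤ) : R[X]) * (p₁ * (u * (m₁ * q.derivative))) := by
  have hm := mul_derivative_pow_mul q m₁ (k + 1)
  have hp := mul_derivative_pow_mul q p₁ e
  set M : R[X] := ((k + 1 : ℕ) : R[X]) * q.derivative * m₁ + q * m₁.derivative with hM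
  set N : R[X] := (e : R[X]) * q.derivative * p₁ + q * p₁.derivative with hN
  have hreduced : m₁ * ((v : R[X]) * p₁ * (q * u.derivative) - (w : R[X]) * u * N) -
      u * ((v : R[X]) * p₁ * M) =
      Polynomial.C κ * (Polynomial.X * (q ^ (k + 1) * m₁ ^ 2) * N) := by
    apply mul_left_cancel₀ (pow_ne_zero (e + (k + 1)) hq)
    have hqH := congrArg (q * ·) H
    simp only [weightedWronskian, Int.cast_zero] at hqH
    linear_combination hqH + (u * (v : R[X]) * (q ^ e * p₁)) * hm +
      ((w : R[X]) * u * (q ^ (k + 1) * m₁) +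
        Polynomial.C κ * Polynomial.X * (q ^ (k + 1) * m₁) ^ 2) * hp
  refine ⟨m₁ * ((v : R[X]) * p₁ * u.derivative - (w : R[X]) * u * p₁.derivative) -
    u * ((v : R[X]) * p₁ * m₁.derivative) -
      Polynomial.C κ * (Polynomial.X * (q ^ k * m₁ ^ 2) * N), ?_⟩
  push_cast at hM ⊢
  linear_combination -hreduced - u * (v : R[X]) * p₁ * hM - m₁ * (w : R[X]) * u * hN

variable {p f n u m : K[X]} {v w d : ℤ} {κ : K}

lemma isUnit_of_weightedWronskian_quotient_eq (hp : p ≠ 0) (hm : m ≠ 0) (hv : 0 < v)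
    (hw : 0 ≤ w) (hcop : IsCoprime u m)
    (H : m * weightedWronskian v w p u - u * weightedWronskian v 0 p m =
      Polynomial.C κ * (Polynomial.X * m ^ 2 * p.derivative)) : IsUnit m := by
  by_contra hmu
  obtain ⟨q, hq, hqm⟩ := WfDvdMonoid.exists_irreducible_factor hmu hm
  have hqu : ¬ q ∣ u := fun h => hq.not_isUnit (hcop.isUnit_of_dvd' h hqm)
  obtain ⟨e, p₁, hqp₁, rfl⟩ := WfDvdMonoid.max_power_factor hp hq
  obtain ⟨k', m₁, hqm₁, rfl⟩ := WfDvdMonoid.max_power_factor hm hq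
  obtain ⟨k, rfl⟩ : ∃ k, k' = k + 1 := by
    refine Nat.exists_eq_succ_of_ne_zero ?_
    rintro rfl
    exact hqm₁ (by rwa [pow_zero, one_mul] at hqm)
  have hqq' : ¬ q ∣ q.derivative := fun h =>
    hq.not_isUnit (IsCoprime.isUnit_of_dvd' hq.separable dvd_rfl h)
  have hqc : ¬ q ∣ ((v * (k + 1) + w * e : ℤ) : K[X]) := by
    have hc : ((v * (k + 1) + w * e : ℤ) : K) ≠ 0 :=
      Int.cast_ne_zero.mpr (by positivity)
    rw [← Polynomial.C_eq_intCast]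
    exact fun h => hq.not_isUnit (isUnit_of_dvd_unit h (Polynomial.isUnit_C.mpr hc.isUnit))
  have hdvd := dvd_of_weightedWronskian_quotient_eq hq.ne_zero H
  simp only [hq.prime.dvd_mul] at hdvd
  tauto

lemma support_eq_singleton_of_weightedWronskian_quotient (hκ : κ ≠ 0) (hw : 0 ≤ w)
    (hdeg : 0 < p.natDegree) (hvw : w * p.natDegree < v) (hgap : w = 0 ∨ p.nextCoeff = 0)
    (hn : n ≠ 0) (hpn : weightedWronskian v d p n = 0)
    (hpf : weightedWronskian v (d + w) p f =
      Polynomial.C κ * (Polynomial.X * n * p.derivative)) :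
    p.support = {p.natDegree} := by
  classical
  obtain ⟨u, m, hfu, hnm, hgcd⟩ := extract_gcd f n
  set g := gcd f n
  have hcop : IsCoprime u m := (gcd_isUnit_iff u m).mp hgcd
  have hg : g ≠ 0 := fun h => hn (by rw [hnm, h, zero_mul])
  have hm : m ≠ 0 := fun h => hn (by rw [hnm, h, mul_zero])
  have hum : m * weightedWronskian v w p u - u * weightedWronskian v 0 p m =
      Polynomial.C κ * (Polynomial.X * m ^ 2 * p.derivative) := by
    apply mul_left_cancel₀ (pow_ne_zero 2 hg)
    rw [hfu, weightedWronskian_mul, hnm] at hpf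
    rw [hnm, ← add_zero d, weightedWronskian_mul] at hpn
    linear_combination g * m * hpf - g * u * hpn
  have hv : 0 < v := lt_of_le_of_lt (by positivity) hvw
  have hunit : IsUnit m := isUnit_of_weightedWronskian_quotient_eq
    (Polynomial.ne_zero_of_natDegree_gt hdeg) hm hv hw hcop hum
  obtain ⟨r, hr, rfl⟩ := Polynomial.isUnit_iff.mp hunit
  have hr' : Polynomial.C r * Polynomial.C r⁻¹ = (1 : K[X]) := by
    rw [← Polynomial.C_mul, mul_inv_cancel₀ hr.ne_zero, Polynomial.C_1]
  refine support_eq_singleton_of_weightedWronskian_eq (f := Polynomial.C r⁻¹ * u)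
    hκ hw hdeg hvw hgap ?_
  apply mul_left_cancel₀ (pow_ne_zero 2 (Polynomial.C_ne_zero.mpr hr.ne_zero))
  simp only [weightedWronskian, Polynomial.derivative_C, Polynomial.derivative_C_mul] at hum ⊢
  linear_combination hum + Polynomial.C r *
    ((v : K[X]) * p * u.derivative - (w : K[X]) * u * p.derivative) * hr'

end RationalSolutions

section PoincareLemma

variable {τ R : Type*} [CommSemiring R]

lemma pderiv_pderiv_comm (i j : τ) (f : MvPolynomial τ R) :
    pderiv i (pderiv j f) = pderiv j (pderiv i f) := by
  rcases eq_or_ne i j with rfl | hij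
  · rfl
  ext m
  simp only [coeff_pderiv, Finsupp.add_apply, Finsupp.single_eq_of_ne hij,
    Finsupp.single_eq_of_ne hij.symm, add_zero, add_right_comm m (Finsupp.single i 1)]
  ring

lemma coeff_X_mul_pderiv (i : τ) (f : MvPolynomial τ R) (m : τ →₀ ℕ) :
    coeff m (X i * pderiv i f) = m i * coeff m f := by
  induction f using MvPolynomial.induction_on' with
  | monomial k a =>
    classical
    rw [X_mul_pderiv_monomial, coeff_smul, coeff_monomial, nsmul_eq_mul]
    split_ifs with h
    · rw [h]
    · rw [mul_zero, mul_zero]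
  | add f g hf hg => rw [map_add, mul_add, coeff_add, hf, hg, coeff_add, mul_add]

lemma exists_coeff_eq_mul (c : (τ →₀ ℕ) → R) (f : MvPolynomial τ R) :
    ∃ g : MvPolynomial τ R, ∀ m, coeff m g = c m * coeff m f := by
  classical
  refine ⟨∑ m ∈ f.support, monomial m (c m * coeff m f), fun m => ?_⟩
  simp only [coeff_sum, coeff_monomial, Finset.sum_ite_eq', mem_support_iff]
  split_ifs with h
  · rfl
  · rw [not_not.mp h, mul_zero]

/- Integrate along rays from the origin: the Euler operator multiplies the degree `n` part of
a potential by `n`. -/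
lemma exists_pderiv_eq {k : Type*} [Field k] [CharZero k] [Finite τ] (A : τ → MvPolynomial τ k)
    (hA : ∀ i j, pderiv i (A j) = pderiv j (A i)) :
    ∃ S : MvPolynomial τ k, ∀ i, pderiv i S = A i := by
  classical
  have := Fintype.ofFinite τ
  obtain ⟨S, hS⟩ := exists_coeff_eq_mul (fun m => (m.degree : k)⁻¹) (∑ j, X j * A j)
  have heuler (i : τ) : pderiv i (∑ j, X j * A j) = A i + ∑ j, X j * pderiv j (A i) := by
    simp only [map_sum, pderiv_mul, pderiv_X, Finset.sum_add_distrib, hA i]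
    simp [Pi.single_apply]
  refine ⟨S, fun i => ?_⟩
  ext m
  have hcoeff : coeff (m + Finsupp.single i 1) (∑ j, X j * A j) * (m i + 1) =
      (m.degree + 1) * coeff m (A i) := by
    rw [← coeff_pderiv, heuler, coeff_add, coeff_sum, Finsupp.degree_eq_sum]
    simp only [coeff_X_mul_pderiv, ← Finset.sum_mul, Nat.cast_sum]
    ring
  have hdeg : ((m + Finsupp.single i 1).degree : k) = m.degree + 1 := by simp
  rw [coeff_pderiv, hS, hdeg, mul_assoc, hcoeff,
    inv_mul_cancel_left₀ (Nat.cast_add_one_ne_zero m.degree)]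

end PoincareLemma

section JacobianBracket

variable {F : Type*} [Field F]

/-- The derivation `[P, ·]` of the polynomial ring. -/
def jbDerivation (P : MvPolynomial (Fin 2) F) :
    Derivation F (MvPolynomial (Fin 2) F) (MvPolynomial (Fin 2) F) :=
  pderiv 0 P • pderiv 1 - pderiv 1 P • pderiv 0

lemma jbDerivation_apply (P f : MvPolynomial (Fin 2) F) : jbDerivation P f = Jb P f := by
  simp only [jbDerivation, Jb, Derivation.sub_apply, Derivation.smul_apply, smul_eq_mul]
  ring

lemma jb_self (P : MvPolynomial (Fin 2) F) : Jb P P = 0 :=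
  sub_self _

/- The form `c⁻¹ Q dP - y dx` is closed, and `S` is its potential. -/
lemma exists_jb_eq_X_mul_pderiv [CharZero F] {P Q : MvPolynomial (Fin 2) F} {c : F} (hc : c ≠ 0)
    (hPQ : Jb P Q = C c) : ∃ S, Jb P S = X 1 * pderiv 1 P := by
  have hclosed : pderiv 0 (C c⁻¹ * Q * pderiv 1 P) = pderiv 1 (C c⁻¹ * Q * pderiv 0 P - X 1) := by
    have hcc : C c⁻¹ * C c = (1 : MvPolynomial (Fin 2) F) := by
      rw [← C_mul, inv_mul_cancel₀ hc, C_1]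
    simp only [map_sub, pderiv_mul, pderiv_C, pderiv_X_self]
    rw [pderiv_pderiv_comm 0 1]
    rw [Jb] at hPQ
    linear_combination -C c⁻¹ * hPQ - hcc
  obtain ⟨S, hS⟩ := exists_pderiv_eq
    ![C c⁻¹ * Q * pderiv 0 P - X 1, C c⁻¹ * Q * pderiv 1 P]
    (Fin.forall_fin_two.mpr ⟨Fin.forall_fin_two.mpr ⟨rfl, hclosed⟩,
      Fin.forall_fin_two.mpr ⟨hclosed.symm, rfl⟩⟩)
  have hS₀ : pderiv 0 S = C c⁻¹ * Q * pderiv 0 P - X 1 := hS 0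
  have hS₁ : pderiv 1 S = C c⁻¹ * Q * pderiv 1 P := hS 1
  refine ⟨S, ?_⟩
  rw [Jb, hS₀, hS₁]
  ring

end JacobianBracket

section Derivations

lemma derivation_eval₂ {k R A : Type*} [CommSemiring k] [CommSemiring R] [CommSemiring A]
    [Algebra k A] {D : Derivation k A A} {φ : R →+* A} (hφ : ∀ r, D (φ r) = 0) (s : A) (ψ : R[X]) :
    D (ψ.eval₂ φ s) = ψ.derivative.eval₂ φ s * D s := by
  induction ψ using Polynomial.induction_on' with
  | add f g hf hg => simp only [map_add, Polynomial.eval₂_add, hf, hg, add_mul]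
  | monomial n r =>
    rw [Polynomial.derivative_monomial, Polynomial.eval₂_monomial, Polynomial.eval₂_monomial,
      Derivation.leibniz, Derivation.leibniz_pow, hφ, map_mul, map_natCast]
    simp only [smul_eq_mul, nsmul_eq_mul, mul_zero, add_zero]
    ring

variable {k R A : Type*} [CommSemiring k] [CommRing R] [IsDomain R] [CharZero R] [CommRing A]
  [Algebra k A] {D : Derivation k A A} {φ : R →+* A}

lemma natDegree_derivative_induction {p : R[X] → Prop} (C : ∀ r, p (Polynomial.C r))
    (derivative : ∀ f : R[X], f.derivative ≠ 0 → p f.derivative → p f) (f : R[X]) :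
    p f := by
  induction hn : f.natDegree using Nat.strong_induction_on generalizing f with
  | _ n ih =>
    by_cases hdeg : f.natDegree = 0
    · rw [Polynomial.eq_C_of_natDegree_eq_zero hdeg]
      exact C _
    · exact derivative f (hdeg ∘ Polynomial.derivative_eq_zero.mp) <|
        ih _ (hn ▸ Polynomial.natDegree_derivative_lt hdeg) _ rfl

lemma eval₂_injective_of_derivation [IsDomain A] (hφ : Function.Injective φ)
    (hD : ∀ r, D (φ r) = 0) {s : A} (hs : D s ≠ 0) :
    Function.Injective (Polynomial.eval₂RingHom φ s) := by
  rw [injective_iff_map_eq_zero]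
  intro ψ
  induction ψ using natDegree_derivative_induction with
  | C r =>
    intro h
    rw [Polynomial.coe_eval₂RingHom, Polynomial.eval₂_C] at h
    rw [(map_eq_zero_iff φ hφ).mp h, Polynomial.C_0]
  | derivative f hf ih =>
    intro h
    have hDf := derivation_eval₂ hD s f
    rw [← Polynomial.coe_eval₂RingHom, h, map_zero] at hDf
    exact absurd (ih ((mul_eq_zero.mp hDf.symm).resolve_right hs)) hf

/- Differentiate `ψ` in its variable until the property holds; `n` comes from the first derivative
for which it does. -/
lemma exists_derivation_eq_mul_of_not {p : A → Prop} {s : A} (hD : ∀ r, D (φ r) = 0)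
    (hinj : Function.Injective (Polynomial.eval₂RingHom φ s)) (hp : ∀ r, p (φ r)) {ψ : R[X]}
    (hψ : ¬ p (ψ.eval₂ φ s)) : ∃ g n, ¬ p g ∧ p n ∧ n ≠ 0 ∧ D g = n * D s := by
  induction ψ using natDegree_derivative_induction with
  | C r => exact absurd (by rw [Polynomial.eval₂_C]; exact hp r) hψ
  | derivative f hf ih =>
    by_cases hpf : p (f.derivative.eval₂ φ s)
    · exact ⟨f.eval₂ φ s, f.derivative.eval₂ φ s, hψ, hpf, (map_ne_zero_iff _ hinj).mpr hf,
        derivation_eval₂ hD s f⟩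
    · exact ih hpf

end Derivations

section DimensionCount

variable {F : Type*} [Field F] {τ : Type*}

lemma coeff_coeff_sum_monomial_monomial {R : Type*} [Semiring R] {M N : ℕ}
    (g : Fin M × Fin N → R) (ij : Fin M × Fin N) :
    ((∑ kl, Polynomial.monomial (kl.2 : ℕ) (Polynomial.monomial (kl.1 : ℕ) (g kl))).coeff
      ij.2).coeff ij.1 = g ij := by
  have hterm (kl : Fin M × Fin N) :
      ((Polynomial.monomial (kl.2 : ℕ) (Polynomial.monomial (kl.1 : ℕ) (g kl))).coeff
        ij.2).coeff ij.1 = if kl = ij then g kl else 0 := by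
    rw [Polynomial.coeff_monomial, apply_ite (Polynomial.coeff · _), Polynomial.coeff_monomial,
      Polynomial.coeff_zero, ← ite_and]
    simp only [Prod.ext_iff, Fin.ext_iff, and_comm]
  simp only [Polynomial.finsetSum_coeff, hterm, Finset.sum_ite_eq', Finset.mem_univ, if_true]

lemma totalDegree_pow_mul_pow_le {P S : MvPolynomial τ F} {i j N : ℕ} (hi : i ≤ N) (hj : j ≤ N) :
    (P ^ i * S ^ j).totalDegree ≤ N * (P.totalDegree + S.totalDegree) := by
  calc (P ^ i * S ^ j).totalDegree
      ≤ i * P.totalDegree + j * S.totalDegree :=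
        (totalDegree_mul _ _).trans (add_le_add (totalDegree_pow _ _) (totalDegree_pow _ _))
    _ ≤ N * (P.totalDegree + S.totalDegree) := by
        rw [mul_add]
        gcongr

/- There are `N ^ 2` products `P ^ i * S ^ j` with `i, j < N`, but only `O(N)` of the monomials
`e s` can occur in them. -/
lemma exists_coeff_eval₂_eq_zero (P S : MvPolynomial τ F) {e : ℕ → τ →₀ ℕ}
    (he : ∀ s, s ≤ (e s).degree) :
    ∃ ψ : F[X][X], ψ ≠ 0 ∧
      ∀ s, coeff (e s) (ψ.eval₂ (Polynomial.aeval P : F[X] →ₐ[F] _).toRingHom S) = 0 := by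
  set T := P.totalDegree + S.totalDegree
  set N := T + 2 with hN
  let V (ij : Fin N × Fin N) (s : Fin (N * T + 1)) : F :=
    coeff (e s) (P ^ (ij.1 : ℕ) * S ^ (ij.2 : ℕ))
  have hV : ¬ LinearIndependent F V := by
    intro h
    have hcard := h.fintype_card_le_finrank
    rw [Module.finrank_fin_fun, Fintype.card_prod, Fintype.card_fin] at hcard
    nlinarith
  obtain ⟨g, hg, ij, hij⟩ := Fintype.not_linearIndependent_iff.mp hV
  refine ⟨∑ kl, Polynomial.monomial (kl.2 : ℕ) (Polynomial.monomial (kl.1 : ℕ) (g kl)), ?_, ?_⟩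
  · intro h
    apply hij
    rw [← coeff_coeff_sum_monomial_monomial g ij, h, Polynomial.coeff_zero, Polynomial.coeff_zero]
  intro s
  have hsum : coeff (e s) (∑ kl, C (g kl) * (P ^ (kl.1 : ℕ) * S ^ (kl.2 : ℕ))) = 0 := by
    simp only [coeff_sum, coeff_C_mul]
    by_cases hs : s < N * T + 1
    · simpa [V] using congrFun hg ⟨s, hs⟩
    · refine Finset.sum_eq_zero fun kl _ => ?_
      rw [coeff_eq_zero_of_totalDegree_lt, mul_zero]
      exact (totalDegree_pow_mul_pow_le kl.1.2.le kl.2.2.le).trans_lt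
        (Nat.lt_of_succ_le ((not_lt.mp hs).trans (he s)))
  convert hsum using 2
  simp only [Polynomial.eval₂_finsetSum, Polynomial.eval₂_monomial, AlgHom.toRingHom_eq_coe,
    RingHom.coe_coe, Polynomial.aeval_monomial, algebraMap_eq, mul_assoc]

end DimensionCount

section Dehomogenization

lemma eq_single_zero_add_single_one_iff {m : Fin 2 →₀ ℕ} {i j : ℕ} :
    m = Finsupp.single 0 i + Finsupp.single 1 j ↔ m 0 = i ∧ m 1 = j := by
  simp [Finsupp.ext_iff, Fin.forall_fin_two]

variable {R : Type*} [CommRing R]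

/-- The substitution `x ↦ t ^ (-ρ)`, `y ↦ Y * t ^ (-σ)`, with `Y` the variable of `R[X]`. The
coefficient of `t ^ (-d)` is the weighted homogeneous part of `(ρ,σ)`-degree `d` at `x = 1`, so that
the leading form is the term of lowest order. -/
def dehomog (ρ σ : ℤ) : MvPolynomial (Fin 2) R →+* HahnSeries ℤ R[X] :=
  eval₂Hom ((HahnSeries.C : R[X] →+* HahnSeries ℤ R[X]).comp Polynomial.C)
    ![HahnSeries.single (-ρ) 1, HahnSeries.single (-σ) Polynomial.X]

variable (ρ σ : ℤ)

lemma dehomog_monomial (m : Fin 2 →₀ ℕ) (a : R) :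
    dehomog ρ σ (monomial m a) =
      HahnSeries.single (-(ρ * m 0 + σ * m 1)) (Polynomial.monomial (m 1) a) := by
  rw [dehomog, eval₂Hom_monomial, Finsupp.prod_fintype _ _ (fun _ => pow_zero _),
    ← Polynomial.C_mul_X_pow_eq_monomial]
  simp only [Fin.prod_univ_two, Matrix.cons_val_zero, Matrix.cons_val_one, HahnSeries.single_pow,
    HahnSeries.single_mul_single, RingHom.comp_apply, HahnSeries.C_apply, one_pow, one_mul,
    zero_add]
  rw [show m 0 • -ρ + m 1 • -σ = -(ρ * m 0 + σ * m 1) by simp only [nsmul_eq_mul]; ring]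

lemma coeff_coeff_dehomog {ρ : ℤ} (hρ : ρ ≠ 0) (f : MvPolynomial (Fin 2) R) (i j : ℕ) :
    ((dehomog ρ σ f).coeff (-(ρ * i + σ * j))).coeff j =
      coeff (Finsupp.single 0 i + Finsupp.single 1 j) f := by
  classical
  induction f using MvPolynomial.induction_on' with
  | monomial m a =>
    have hm : -(ρ * i + σ * j) = -(ρ * m 0 + σ * m 1) ∧ m 1 = j ↔ m 0 = i ∧ m 1 = j := by
      refine and_congr_left fun h => ?_
      rw [h, neg_inj, add_left_inj, mul_right_inj' hρ, Nat.cast_inj, eq_comm]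
    rw [dehomog_monomial, coeff_monomial, HahnSeries.coeff_single,
      apply_ite (Polynomial.coeff · j), Polynomial.coeff_monomial, Polynomial.coeff_zero,
      ← ite_and]
    simp only [eq_single_zero_add_single_one_iff, hm]
  | add f g hf hg =>
    rw [map_add, HahnSeries.coeff_add, Polynomial.coeff_add, hf, hg, coeff_add]

lemma exists_eq_of_coeff_coeff_dehomog_ne_zero {f : MvPolynomial (Fin 2) R} {e : ℤ} {j : ℕ}
    (h : ((dehomog ρ σ f).coeff e).coeff j ≠ 0) : ∃ i : ℕ, e = -(ρ * i + σ * j) := by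
  induction f using MvPolynomial.induction_on' with
  | monomial m a =>
    rw [dehomog_monomial, HahnSeries.coeff_single] at h
    split_ifs at h with he
    · rw [Polynomial.coeff_monomial] at h
      split_ifs at h with hj
      · exact ⟨m 0, hj ▸ he⟩
      · exact absurd rfl h
    · exact absurd (Polynomial.coeff_zero j) h
  | add f g hf hg =>
    by_cases hfe : ((dehomog ρ σ f).coeff e).coeff j = 0
    · refine hg ?_
      rwa [map_add, HahnSeries.coeff_add, Polynomial.coeff_add, hfe, zero_add] at h
    · exact hf hfe

lemma dehomog_injective {ρ : ℤ} (hρ : ρ ≠ 0) :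
    Function.Injective (dehomog (R := R) ρ σ) := by
  rw [injective_iff_map_eq_zero]
  intro f hf
  ext m
  have hm := coeff_coeff_dehomog σ hρ f (m 0) (m 1)
  rw [← eq_single_zero_add_single_one_iff.mpr ⟨rfl, rfl⟩] at hm
  rw [← hm, hf, HahnSeries.coeff_zero, Polynomial.coeff_zero, coeff_zero]

lemma coeff_dehomog_X_mul_pderiv (f : MvPolynomial (Fin 2) R) (e : ℤ) :
    (dehomog ρ σ (X 1 * pderiv 1 f)).coeff e =
      Polynomial.X * ((dehomog ρ σ f).coeff e).derivative := by
  induction f using MvPolynomial.induction_on' with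
  | monomial m a =>
    rw [X_mul_pderiv_monomial, map_nsmul, dehomog_monomial, HahnSeries.coeff_smul,
      HahnSeries.coeff_single]
    split_ifs
    · ext j
      rw [coeff_X_mul_derivative, Polynomial.coeff_smul, Polynomial.coeff_monomial, nsmul_eq_mul]
      split_ifs with hj
      · rw [hj]
      · rw [mul_zero, mul_zero]
    · rw [smul_zero, map_zero, mul_zero]
  | add f g hf hg => simp only [map_add, mul_add, HahnSeries.coeff_add, hf, hg]

/-- The Euler derivation `ρ x ∂_x + σ y ∂_y`, which multiplies a form of `(ρ,σ)`-degree `d`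
by `d`. -/
def weightedEuler (f : MvPolynomial (Fin 2) R) : MvPolynomial (Fin 2) R :=
  ρ • (X 0 * pderiv 0 f) + σ • (X 1 * pderiv 1 f)

lemma coeff_dehomog_weightedEuler (f : MvPolynomial (Fin 2) R) (e : ℤ) :
    (dehomog ρ σ (weightedEuler ρ σ f)).coeff e =
      ((-e : ℤ) : R[X]) * (dehomog ρ σ f).coeff e := by
  rw [weightedEuler]
  induction f using MvPolynomial.induction_on' with
  | monomial m a =>
    simp only [X_mul_pderiv_monomial, map_add, map_zsmul, map_nsmul, dehomog_monomial,
      HahnSeries.coeff_add, HahnSeries.coeff_smul, HahnSeries.coeff_single]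
    split_ifs with h
    · rw [h]
      simp only [zsmul_eq_mul, nsmul_eq_mul]
      push_cast
      ring
    · simp only [smul_zero, add_zero, mul_zero]
  | add f g hf hg =>
    simp only [map_add, mul_add, smul_add, HahnSeries.coeff_add] at hf hg ⊢
    rw [← hf, ← hg]
    abel

lemma orderTop_dehomog_le_X_mul_pderiv (f : MvPolynomial (Fin 2) R) :
    (dehomog ρ σ f).orderTop ≤ (dehomog ρ σ (X 1 * pderiv 1 f)).orderTop := by
  rw [HahnSeries.le_orderTop_iff_forall]
  intro e he
  rw [coeff_dehomog_X_mul_pderiv, HahnSeries.coeff_eq_zero_of_lt_orderTop he, map_zero, mul_zero]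

lemma orderTop_dehomog_le_weightedEuler (f : MvPolynomial (Fin 2) R) :
    (dehomog ρ σ f).orderTop ≤ (dehomog ρ σ (weightedEuler ρ σ f)).orderTop := by
  rw [HahnSeries.le_orderTop_iff_forall]
  intro e he
  rw [coeff_dehomog_weightedEuler, HahnSeries.coeff_eq_zero_of_lt_orderTop he, mul_zero]

end Dehomogenization

section LeadingForm

section HahnSeries

variable {Γ S : Type*} [AddCommMonoid Γ] [LinearOrder Γ] [IsOrderedCancelAddMonoid Γ]
  [NonUnitalNonAssocSemiring S] {x y : HahnSeries Γ S} {a b : Γ}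

lemma add_le_orderTop_mul (ha : a ≤ x.orderTop) (hb : b ≤ y.orderTop) :
    (a + b : Γ) ≤ (x * y).orderTop := by
  rw [WithTop.coe_add]
  exact (add_le_add ha hb).trans HahnSeries.orderTop_add_le_mul

lemma coeff_mul_add_of_le_orderTop (ha : a ≤ x.orderTop) (hb : b ≤ y.orderTop) :
    (x * y).coeff (a + b) = x.coeff a * y.coeff b := by
  rw [HahnSeries.coeff_mul]
  refine Finset.sum_eq_single (a, b) (fun p hp hne => absurd ?_ hne) fun hp => ?_
  · rw [Finset.mem_antidiagonal] at hp
    have hp₁ : a ≤ p.1 :=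
      WithTop.coe_le_coe.mp (ha.trans (HahnSeries.orderTop_le_of_coeff_ne_zero hp.1))
    have hp₂ : b ≤ p.2 :=
      WithTop.coe_le_coe.mp (hb.trans (HahnSeries.orderTop_le_of_coeff_ne_zero hp.2.1))
    obtain ⟨h₁, h₂⟩ := (add_eq_add_iff_eq_and_eq hp₁ hp₂).mp hp.2.2.symm
    exact (Prod.ext h₁ h₂).symm
  · simp only [Finset.mem_antidiagonal, HahnSeries.mem_support, and_true, not_and_or,
      not_not] at hp
    obtain h | h := hp <;> simp only [h, zero_mul, mul_zero]

end HahnSeries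

variable {F : Type*} [Field F] (ρ σ : ℤ)

/-- The leading form `ℓ_{ρ,σ}(f)` at `x = 1`, as a polynomial in `y`. -/
def leadPoly (f : MvPolynomial (Fin 2) F) : F[X] :=
  (dehomog ρ σ f).leadingCoeff

variable {ρ}

lemma coeff_coeff_dehomog_ne_zero_iff (hρ : ρ ≠ 0) {f : MvPolynomial (Fin 2) F} {i j : ℕ} :
    ((dehomog ρ σ f).coeff (-(ρ * i + σ * j))).coeff j ≠ 0 ↔ (i, j) ∈ Supp f := by
  rw [coeff_coeff_dehomog σ hρ]
  rfl

lemma order_dehomog (hρ : ρ ≠ 0) (f : MvPolynomial (Fin 2) F) :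
    (dehomog ρ σ f).order = -wdeg ρ σ f := by
  obtain rfl | hf := eq_or_ne f 0
  · simp [wdeg, Supp]
  have hφ : dehomog ρ σ f ≠ 0 := (map_ne_zero_iff _ (dehomog_injective σ hρ)).mpr hf
  have hmax : IsGreatest {d : ℤ | ∃ p ∈ Supp f, d = ρ * (p.1 : ℤ) + σ * (p.2 : ℤ)}
      (-(dehomog ρ σ f).order) := by
    constructor
    · obtain ⟨j, hj⟩ : ∃ j, ((dehomog ρ σ f).coeff (dehomog ρ σ f).order).coeff j ≠ 0 := by
        by_contra! h
        exact hφ (HahnSeries.coeff_order_eq_zero.mp (Polynomial.ext h))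
      obtain ⟨i, hi⟩ := exists_eq_of_coeff_coeff_dehomog_ne_zero ρ σ hj
      rw [hi, coeff_coeff_dehomog_ne_zero_iff σ hρ] at hj
      exact ⟨(i, j), hj, by rw [hi, neg_neg]⟩
    · rintro _ ⟨⟨i, j⟩, hij, rfl⟩
      rw [← coeff_coeff_dehomog_ne_zero_iff σ hρ] at hij
      refine le_neg_of_le_neg (HahnSeries.order_le_of_coeff_ne_zero fun h => hij ?_)
      rw [h, Polynomial.coeff_zero]
  rw [wdeg, hmax.csSup_eq, neg_neg]

lemma leadPoly_eq_coeff (hρ : ρ ≠ 0) (f : MvPolynomial (Fin 2) F) :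
    leadPoly ρ σ f = (dehomog ρ σ f).coeff (-wdeg ρ σ f) := by
  rw [leadPoly, HahnSeries.leadingCoeff_eq, order_dehomog σ hρ]

lemma leadPoly_ne_zero (hρ : ρ ≠ 0) {f : MvPolynomial (Fin 2) F} (hf : f ≠ 0) :
    leadPoly ρ σ f ≠ 0 :=
  HahnSeries.leadingCoeff_ne_zero.mpr ((map_ne_zero_iff _ (dehomog_injective σ hρ)).mpr hf)

lemma neg_wdeg_le_orderTop_dehomog (hρ : ρ ≠ 0) (f : MvPolynomial (Fin 2) F) :
    ((-wdeg ρ σ f : ℤ) : WithTop ℤ) ≤ (dehomog ρ σ f).orderTop := by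
  rw [HahnSeries.le_orderTop_iff_forall]
  intro e he
  rw [← order_dehomog σ hρ, WithTop.coe_lt_coe] at he
  exact HahnSeries.coeff_eq_zero_of_lt_order he

lemma wdeg_eq_and_leadPoly_eq (hρ : ρ ≠ 0) {f : MvPolynomial (Fin 2) F} {d : ℤ} {q : F[X]}
    (hd : ((-d : ℤ) : WithTop ℤ) ≤ (dehomog ρ σ f).orderTop)
    (hq : (dehomog ρ σ f).coeff (-d) = q) (hq₀ : q ≠ 0) :
    wdeg ρ σ f = d ∧ leadPoly ρ σ f = q := by
  have hwdeg : wdeg ρ σ f = d := by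
    have hle := (HahnSeries.orderTop_le_of_coeff_ne_zero (hq ▸ hq₀)).antisymm hd
    have hφ : dehomog ρ σ f ≠ 0 := by
      intro h
      exact hq₀ (by rw [← hq, h, HahnSeries.coeff_zero])
    rw [← HahnSeries.order_eq_orderTop_of_ne_zero hφ, WithTop.coe_inj, order_dehomog σ hρ] at hle
    exact neg_injective hle
  exact ⟨hwdeg, by rw [leadPoly_eq_coeff σ hρ, hwdeg, hq]⟩

lemma wdeg_mul (hρ : ρ ≠ 0) {f g : MvPolynomial (Fin 2) F} (hf : f ≠ 0) (hg : g ≠ 0) :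
    wdeg ρ σ (f * g) = wdeg ρ σ f + wdeg ρ σ g := by
  have hinj := dehomog_injective (R := F) σ hρ
  apply neg_injective
  rw [neg_add, ← order_dehomog σ hρ, ← order_dehomog σ hρ, ← order_dehomog σ hρ, map_mul,
    HahnSeries.order_mul ((map_ne_zero_iff _ hinj).mpr hf) ((map_ne_zero_iff _ hinj).mpr hg)]

variable (ρ)

lemma leadPoly_mul (f g : MvPolynomial (Fin 2) F) :
    leadPoly ρ σ (f * g) = leadPoly ρ σ f * leadPoly ρ σ g := by
  rw [leadPoly, map_mul, HahnSeries.leadingCoeff_mul]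
  rfl

variable {ρ}

lemma exists_mem_leadSupp_of_coeff_leadPoly_ne_zero (hρ : ρ ≠ 0)
    {f : MvPolynomial (Fin 2) F} {j : ℕ} (h : (leadPoly ρ σ f).coeff j ≠ 0) :
    ∃ i, (i, j) ∈ LeadSupp ρ σ f := by
  rw [leadPoly_eq_coeff σ hρ] at h
  obtain ⟨i, hi⟩ := exists_eq_of_coeff_coeff_dehomog_ne_zero ρ σ h
  rw [hi, coeff_coeff_dehomog_ne_zero_iff σ hρ] at h
  exact ⟨i, h, (neg_injective hi).symm⟩

lemma coeff_leadPoly_ne_zero_of_mem_leadSupp (hρ : ρ ≠ 0) {f : MvPolynomial (Fin 2) F}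
    {i j : ℕ} (h : (i, j) ∈ LeadSupp ρ σ f) : (leadPoly ρ σ f).coeff j ≠ 0 := by
  rw [leadPoly_eq_coeff σ hρ, ← h.2]
  exact (coeff_coeff_dehomog_ne_zero_iff σ hρ).mpr h.1

lemma natDegree_leadPoly_of_isEn (hρ : ρ ≠ 0) {f : MvPolynomial (Fin 2) F} {e : ℕ × ℕ}
    (h : IsEn ρ σ f e) : (leadPoly ρ σ f).natDegree = e.2 := by
  refine le_antisymm (Polynomial.natDegree_le_iff_coeff_eq_zero.mpr fun j hj => ?_)
    (Polynomial.le_natDegree_of_ne_zero (coeff_leadPoly_ne_zero_of_mem_leadSupp σ hρ h.1))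
  by_contra hcoeff
  obtain ⟨i, hi⟩ := exists_mem_leadSupp_of_coeff_leadPoly_ne_zero σ hρ hcoeff
  exact hj.not_ge (h.2 _ hi)

lemma leadSupp_subsingleton (hρ : ρ ≠ 0) {f : MvPolynomial (Fin 2) F} {b : ℕ}
    (h : (leadPoly ρ σ f).support = {b}) : (LeadSupp ρ σ f).Subsingleton := by
  have hsnd : ∀ p ∈ LeadSupp ρ σ f, p.2 = b := fun p hp => by
    simpa [h] using Polynomial.mem_support_iff.mpr
      (coeff_leadPoly_ne_zero_of_mem_leadSupp σ hρ hp)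
  intro p hp q hq
  have hpq : p.2 = q.2 := (hsnd p hp).trans (hsnd q hq).symm
  have hfst := hp.2.trans hq.2.symm
  rw [hpq, add_left_inj, mul_right_inj' hρ, Nat.cast_inj] at hfst
  exact Prod.ext hfst hpq

lemma nextCoeff_leadPoly_eq_zero (hρ : ρ ≠ 0) (hdvd : ¬ ρ ∣ σ) (f : MvPolynomial (Fin 2) F) :
    (leadPoly ρ σ f).nextCoeff = 0 := by
  by_contra h
  have hdeg : 0 < (leadPoly ρ σ f).natDegree := by
    by_contra h₀
    exact h (by rw [Polynomial.nextCoeff, if_pos (by omega)])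
  rw [Polynomial.nextCoeff_of_natDegree_pos hdeg] at h
  obtain ⟨i, hi⟩ := exists_mem_leadSupp_of_coeff_leadPoly_ne_zero σ hρ h
  obtain ⟨a, ha⟩ := exists_mem_leadSupp_of_coeff_leadPoly_ne_zero σ hρ
    (Polynomial.leadingCoeff_ne_zero.mpr (Polynomial.ne_zero_of_natDegree_gt hdeg))
  have heq := hi.2.trans ha.2.symm
  push_cast [Nat.cast_pred hdeg] at heq
  exact hdvd ⟨i - a, by linear_combination -heq⟩

variable (ρ)

/-- The Jacobian bracket of the `(ρ,σ)`-leading forms of `f` and `g`, multiplied by `ρ` and taken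
at `x = 1`. If it is nonzero, it is `ρ` times the leading form of `[f,g]`. -/
def leadWronskian (f g : MvPolynomial (Fin 2) F) : F[X] :=
  weightedWronskian (wdeg ρ σ f) (wdeg ρ σ g) (leadPoly ρ σ f) (leadPoly ρ σ g)

lemma monomial_mul_jb (f g : MvPolynomial (Fin 2) F) :
    monomial (Finsupp.single 0 1 + Finsupp.single 1 1) (ρ : F) * Jb f g =
      weightedEuler ρ σ f * (X 1 * pderiv 1 g) - weightedEuler ρ σ g * (X 1 * pderiv 1 f) := by
  have hmon : monomial (Finsupp.single 0 1 + Finsupp.single 1 1) (ρ : F) =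
      (ρ : MvPolynomial (Fin 2) F) * (X 0 * X 1) := by
    rw [X, X, monomial_mul, ← map_intCast (C : F →+* MvPolynomial (Fin 2) F), C_mul_monomial,
      mul_one, mul_one]
  simp only [hmon, Jb, weightedEuler, zsmul_eq_mul]
  ring

variable {ρ}

lemma neg_wdeg_le_orderTop_dehomog_weightedEuler (hρ : ρ ≠ 0) (f : MvPolynomial (Fin 2) F) :
    ((-wdeg ρ σ f : ℤ) : WithTop ℤ) ≤ (dehomog ρ σ (weightedEuler ρ σ f)).orderTop :=
  (neg_wdeg_le_orderTop_dehomog σ hρ f).trans (orderTop_dehomog_le_weightedEuler ρ σ f)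

lemma neg_wdeg_le_orderTop_dehomog_X_mul_pderiv (hρ : ρ ≠ 0) (f : MvPolynomial (Fin 2) F) :
    ((-wdeg ρ σ f : ℤ) : WithTop ℤ) ≤ (dehomog ρ σ (X 1 * pderiv 1 f)).orderTop :=
  (neg_wdeg_le_orderTop_dehomog σ hρ f).trans (orderTop_dehomog_le_X_mul_pderiv ρ σ f)

lemma neg_wdeg_add_wdeg_le_orderTop_dehomog_monomial_mul_jb (hρ : ρ ≠ 0)
    (f g : MvPolynomial (Fin 2) F) :
    ((-(wdeg ρ σ f + wdeg ρ σ g) : ℤ) : WithTop ℤ) ≤ (dehomog ρ σ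
      (monomial (Finsupp.single 0 1 + Finsupp.single 1 1) (ρ : F) * Jb f g)).orderTop := by
  rw [monomial_mul_jb ρ σ, map_sub, map_mul _ (weightedEuler ρ σ f),
    map_mul _ (weightedEuler ρ σ g), neg_add]
  refine le_trans (le_min ?_ ?_) HahnSeries.min_orderTop_le_orderTop_sub
  · exact add_le_orderTop_mul (neg_wdeg_le_orderTop_dehomog_weightedEuler σ hρ f)
      (neg_wdeg_le_orderTop_dehomog_X_mul_pderiv σ hρ g)
  · rw [add_comm]
    exact add_le_orderTop_mul (neg_wdeg_le_orderTop_dehomog_weightedEuler σ hρ g)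
      (neg_wdeg_le_orderTop_dehomog_X_mul_pderiv σ hρ f)

lemma coeff_dehomog_monomial_mul_jb (hρ : ρ ≠ 0) (f g : MvPolynomial (Fin 2) F) :
    (dehomog ρ σ (monomial (Finsupp.single 0 1 + Finsupp.single 1 1) (ρ : F) * Jb f g)).coeff
      (-(wdeg ρ σ f + wdeg ρ σ g)) = Polynomial.X * leadWronskian ρ σ f g := by
  rw [monomial_mul_jb ρ σ, map_sub, map_mul _ (weightedEuler ρ σ f),
    map_mul _ (weightedEuler ρ σ g), neg_add, HahnSeries.coeff_sub,
    coeff_mul_add_of_le_orderTop (neg_wdeg_le_orderTop_dehomog_weightedEuler σ hρ f)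
      (neg_wdeg_le_orderTop_dehomog_X_mul_pderiv σ hρ g), add_comm (-wdeg ρ σ f),
    coeff_mul_add_of_le_orderTop (neg_wdeg_le_orderTop_dehomog_weightedEuler σ hρ g)
      (neg_wdeg_le_orderTop_dehomog_X_mul_pderiv σ hρ f)]
  simp only [coeff_dehomog_weightedEuler, coeff_dehomog_X_mul_pderiv, neg_neg,
    ← leadPoly_eq_coeff σ hρ, leadWronskian, weightedWronskian]
  ring

lemma leadWronskian_eq_zero_of_jb_eq_zero (hρ : ρ ≠ 0) {f g : MvPolynomial (Fin 2) F}
    (h : Jb f g = 0) : leadWronskian ρ σ f g = 0 := by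
  have hcoeff := coeff_dehomog_monomial_mul_jb σ hρ f g
  rw [h, mul_zero, map_zero, HahnSeries.coeff_zero] at hcoeff
  exact (mul_eq_zero.mp hcoeff.symm).resolve_left Polynomial.X_ne_zero

lemma wdeg_and_leadPoly_X_mul_pderiv (hρ : ρ ≠ 0) {f : MvPolynomial (Fin 2) F}
    (h : (leadPoly ρ σ f).derivative ≠ 0) :
    wdeg ρ σ (X 1 * pderiv 1 f) = wdeg ρ σ f ∧
      leadPoly ρ σ (X 1 * pderiv 1 f) = Polynomial.X * (leadPoly ρ σ f).derivative := by
  refine wdeg_eq_and_leadPoly_eq σ hρ (neg_wdeg_le_orderTop_dehomog_X_mul_pderiv σ hρ f) ?_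
    (mul_ne_zero Polynomial.X_ne_zero h)
  rw [coeff_dehomog_X_mul_pderiv, leadPoly_eq_coeff σ hρ]

lemma wdeg_and_leadPoly_monomial (hρ : ρ ≠ 0) (i j : ℕ) {a : F} (ha : a ≠ 0) :
    wdeg ρ σ (monomial (Finsupp.single 0 i + Finsupp.single 1 j) a) = ρ * i + σ * j ∧
      leadPoly ρ σ (monomial (Finsupp.single 0 i + Finsupp.single 1 j) a) =
        Polynomial.monomial j a := by
  have hq : Polynomial.monomial j a ≠ 0 := (Polynomial.monomial_eq_zero_iff a j).not.mpr ha
  obtain ⟨h₀, h₁⟩ := eq_single_zero_add_single_one_iff.mp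
    (rfl : (Finsupp.single 0 i + Finsupp.single 1 j : Fin 2 →₀ ℕ) = _)
  refine wdeg_eq_and_leadPoly_eq σ hρ ?_ ?_ hq <;> rw [dehomog_monomial, h₀, h₁]
  · rw [HahnSeries.orderTop_single hq]
  · rw [HahnSeries.coeff_single_same]

variable [CharZero F]

lemma wdeg_and_leadPoly_jb (hρ : ρ ≠ 0) {f g : MvPolynomial (Fin 2) F}
    (h : leadWronskian ρ σ f g ≠ 0) :
    wdeg ρ σ f + wdeg ρ σ g = ρ + σ + wdeg ρ σ (Jb f g) ∧
      leadWronskian ρ σ f g = Polynomial.C (ρ : F) * leadPoly ρ σ (Jb f g) := by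
  have hρF : (ρ : F) ≠ 0 := Int.cast_ne_zero.mpr hρ
  have hJb : Jb f g ≠ 0 := fun hJb => h (leadWronskian_eq_zero_of_jb_eq_zero σ hρ hJb)
  obtain ⟨hdeg, hlead⟩ := wdeg_eq_and_leadPoly_eq σ hρ
    (neg_wdeg_add_wdeg_le_orderTop_dehomog_monomial_mul_jb σ hρ f g)
    (coeff_dehomog_monomial_mul_jb σ hρ f g) (mul_ne_zero Polynomial.X_ne_zero h)
  obtain ⟨hdeg_xy, hlead_xy⟩ := wdeg_and_leadPoly_monomial σ hρ 1 1 hρF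
  constructor
  · rw [← hdeg, wdeg_mul σ hρ (monomial_eq_zero.not.mpr hρF) hJb, hdeg_xy, Nat.cast_one, mul_one,
      mul_one]
  · apply mul_left_cancel₀ Polynomial.X_ne_zero
    rw [← hlead, leadPoly_mul, hlead_xy, ← Polynomial.C_mul_X_eq_monomial]
    ring

end LeadingForm

section JacobianPair

variable {F : Type*} [Field F] [CharZero F] {ρ : ℤ} (σ : ℤ) {P : MvPolynomial (Fin 2) F}

lemma exists_mem_supp_of_leadWronskian_eq_zero (hρ : ρ ≠ 0) {f : MvPolynomial (Fin 2) F}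
    (hf : f ≠ 0) {a b : ℕ} (hab : IsEn ρ σ P (a, b)) (hPf : leadWronskian ρ σ P f = 0) :
    ∃ i j, (i, j) ∈ Supp f ∧ a * j = i * b := by
  have hP : leadPoly ρ σ P ≠ 0 := fun h =>
    coeff_leadPoly_ne_zero_of_mem_leadSupp σ hρ hab.1 (by rw [h, Polynomial.coeff_zero])
  have hf' := leadPoly_ne_zero σ hρ hf
  obtain ⟨i, hi⟩ := exists_mem_leadSupp_of_coeff_leadPoly_ne_zero σ hρ
    (Polynomial.leadingCoeff_ne_zero.mpr hf')
  have hdeg := mul_natDegree_eq_of_weightedWronskian_eq_zero hP hf' hPf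
  rw [natDegree_leadPoly_of_isEn σ hρ hab, ← hi.2, ← hab.1.2] at hdeg
  refine ⟨i, _, hi.1, ?_⟩
  zify
  apply mul_left_cancel₀ hρ
  linear_combination hdeg

lemma exists_leadWronskian_eval₂_ne_zero (hρ : ρ ≠ 0) {a b : ℕ} (hab : IsEn ρ σ P (a, b))
    (hb : 0 < b) {S : MvPolynomial (Fin 2) F} (hinj : Function.Injective
      (Polynomial.eval₂RingHom (Polynomial.aeval P : F[X] →ₐ[F] _).toRingHom S)) :
    ∃ ψ : F[X][X], leadWronskian ρ σ P
      (ψ.eval₂ (Polynomial.aeval P : F[X] →ₐ[F] _).toRingHom S) ≠ 0 := by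
  obtain ⟨ψ, hψ, hcoeff⟩ := exists_coeff_eval₂_eq_zero P S
    (e := fun j => Finsupp.single 0 (a * j / b) + Finsupp.single 1 j) fun j => by simp
  refine ⟨ψ, fun h => ?_⟩
  obtain ⟨i, j, hij, hray⟩ := exists_mem_supp_of_leadWronskian_eq_zero σ hρ
    ((map_ne_zero_iff _ hinj).mpr hψ) hab h
  apply hij
  rw [← hcoeff j, Nat.div_eq_of_eq_mul_left hb hray]
  rfl

lemma exists_jb_eq_mul_jb_of_isEn (hρ : ρ ≠ 0) {a b : ℕ} (hab : IsEn ρ σ P (a, b)) (hb : 0 < b)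
    {S : MvPolynomial (Fin 2) F} (hP : pderiv 1 P ≠ 0) (hS : Jb P S ≠ 0) :
    ∃ g n, leadWronskian ρ σ P g ≠ 0 ∧ leadWronskian ρ σ P n = 0 ∧ n ≠ 0 ∧
      Jb P g = n * Jb P S := by
  have hconst (r : F[X]) :
      jbDerivation P ((Polynomial.aeval P : F[X] →ₐ[F] _).toRingHom r) = 0 := by
    rw [AlgHom.toRingHom_eq_coe, RingHom.coe_coe, Derivation.map_aeval, jbDerivation_apply, jb_self,
      smul_zero]
  have hinj : Function.Injective (Polynomial.aeval P : F[X] →ₐ[F] _).toRingHom :=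
    eval₂_injective_of_derivation (D := pderiv 1) (φ := C) (C_injective _ _) (fun _ => pderiv_C) hP
  have hinj₂ : Function.Injective
      (Polynomial.eval₂RingHom (Polynomial.aeval P : F[X] →ₐ[F] _).toRingHom S) :=
    eval₂_injective_of_derivation hinj hconst (by rwa [jbDerivation_apply])
  obtain ⟨ψ, hψ⟩ := exists_leadWronskian_eval₂_ne_zero σ hρ hab hb hinj₂
  simpa only [jbDerivation_apply] using exists_derivation_eq_mul_of_not
    (p := fun f => leadWronskian ρ σ P f = 0) hconst hinj₂
    (fun r => leadWronskian_eq_zero_of_jb_eq_zero σ hρ (by rw [← jbDerivation_apply, hconst])) hψ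

variable {σ}

lemma support_leadPoly_eq_singleton (hρ : ρ ≠ 0) (hρσ : 0 ≤ ρ + σ) {Q : MvPolynomial (Fin 2) F}
    {c : F} (hc : c ≠ 0) (hPQ : Jb P Q = C c) {a b : ℕ} (hab : IsEn ρ σ P (a, b)) (hb : 0 < b)
    (hdeg : (ρ + σ) * b < wdeg ρ σ P) (hgap : ρ + σ = 0 ∨ (leadPoly ρ σ P).nextCoeff = 0) :
    (leadPoly ρ σ P).support = {b} := by
  have hnat : (leadPoly ρ σ P).natDegree = b := natDegree_leadPoly_of_isEn σ hρ hab
  have hderiv : (leadPoly ρ σ P).derivative ≠ 0 :=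
    Polynomial.derivative_eq_zero.not.mpr (hnat ▸ hb.ne')
  obtain ⟨hdegPy, hleadPy⟩ := wdeg_and_leadPoly_X_mul_pderiv σ hρ hderiv
  have hPy : X 1 * pderiv 1 P ≠ 0 := fun h => mul_ne_zero Polynomial.X_ne_zero hderiv
    (by rw [← hleadPy, h, leadPoly, map_zero, HahnSeries.leadingCoeff_zero])
  obtain ⟨S, hS⟩ := exists_jb_eq_X_mul_pderiv hc hPQ
  obtain ⟨g, n, hg, hn, hn₀, hgn⟩ :=
    exists_jb_eq_mul_jb_of_isEn σ hρ hab hb (right_ne_zero_of_mul hPy) (hS ▸ hPy)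
  obtain ⟨hdegg, hleadg⟩ := wdeg_and_leadPoly_jb σ hρ hg
  rw [hgn, hS, wdeg_mul σ hρ hn₀ hPy, hdegPy] at hdegg
  rw [hgn, hS, leadPoly_mul, hleadPy, leadWronskian,
    show wdeg ρ σ g = wdeg ρ σ n + (ρ + σ) by linarith] at hleadg
  have hsupp := support_eq_singleton_of_weightedWronskian_quotient (f := leadPoly ρ σ g)
    (κ := (ρ : F)) (Int.cast_ne_zero.mpr hρ) hρσ (hnat ▸ hb) (hnat ▸ hdeg) hgap
    (leadPoly_ne_zero σ hρ hn₀) hn (by rw [hleadg]; ring)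
  rwa [hnat] at hsupp

end JacobianPair

/-- If `[P,Q]` is a nonzero constant, `(ρ,σ)` is a direction with `ρ>0`, `σ<0`,
the support of `ℓ_{ρ,σ}(P)` has at least two elements, and `en_{ρ,σ}(P)=(a',b')`
with `a'>b'>0`, then `ρ+σ<0`. -/
theorem stmt3 (K : Type*) [Field K] [CharZero K] (P Q : MvPolynomial (Fin 2) K)
    (c : K) (hc : c ≠ 0) (hPQ : Jb P Q = MvPolynomial.C c)
    (ρ σ : ℤ) (hgcd : Int.gcd ρ σ = 1) (hρ : 0 < ρ) (hσ : σ < 0)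
    (hlead : (LeadSupp ρ σ P).Nontrivial)
    (a' b' : ℕ) (hen : IsEn ρ σ P (a', b')) (hab : b' < a') (hb : 0 < b') :
    ρ + σ < 0 := by
  by_contra! hρσ
  have hwdeg : ρ * a' + σ * b' = wdeg ρ σ P := hen.1.2
  have hdeg : (ρ + σ) * b' < wdeg ρ σ P := by
    rw [← hwdeg]
    nlinarith
  have hgap : ρ + σ = 0 ∨ (leadPoly ρ σ P).nextCoeff = 0 := by
    by_cases hdvd : ρ ∣ σ
    · exact Or.inl (hρσ.antisymm' (by linarith [Int.le_of_dvd (neg_pos.mpr hσ) hdvd.neg_right]))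
    · exact Or.inr (nextCoeff_leadPoly_eq_zero σ hρ.ne' hdvd P)
  have hsupp : (leadPoly ρ σ P).support = {b'} :=
    support_leadPoly_eq_singleton hρ.ne' hρσ hc hPQ hen hb hdeg hgap
  exact Set.not_subsingleton_iff.mpr hlead (leadSupp_subsingleton σ hρ.ne' hsupp)

end
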